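/- Suppose K = Π_{i=1}^n [−l_i, l_i] × Y with 0 ≤ l_i ≤ +∞ for each i and Y ⊆ ℝᵐ, and suppose κ > 0 satisfies |f(x,y) − f(x',y)| ≤ κ ‖x − x'‖₂ for all (x,y), (x',y) ∈ K with ‖x − x'‖₀ ≤ 1. Let θ > κ/λ and define Φ(x) = Σ_{i=1}^n min{1, θ|x_i|}. For x ∈ ℝⁿ, define t^x ∈ ℝⁿ by t^x_i = 0 if |x_i| < 1/θ and t^x_i = x_i otherwise. Then for every (x,y) ∈ K one has (t^x, y) ∈ K and f(x,y) + λΦ(x) ≥ f(t^x,y) + λΦ(t^x), with equality if and only if |x_i| ≥ 1/θ for every index i with x_i ≠ 0. -/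

import Mathlib

open scoped ENNReal

/-!
Passing from `x` to `t^x` sets to zero, one at a time, the coordinates with `|x_i| < 1/θ`. Zeroing
such a coordinate raises `f` by at most `κ|x_i|`, while it lowers `λΦ` by exactly `λθ|x_i|`. Since
`κ < λθ`, the objective drops by at least `(λθ - κ) ∑ |x_i|`, the sum running over those
coordinates, and this is positive unless they all vanish already.
-/

open Function

namespace CappedL1

section Truncation

variable {ι : Type*} {E : ι → Type*} [∀ i, NormedAddCommGroup (E i)]

/-- The truncation `t^x` of `x` at level `τ` (hard thresholding): the blocks of norm less than `τ`
are set to zero. The paper's case is `E i = ℝ`, `τ = 1 / θ`. -/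
noncomputable def truncate (τ : ℝ) (x : ∀ i, E i) : ∀ i, E i :=
  fun i => if ‖x i‖ < τ then 0 else x i

theorem truncate_eq_self {τ : ℝ} {x : ∀ i, E i} (hx : ∀ i, x i ≠ 0 → τ ≤ ‖x i‖) :
    truncate τ x = x := by
  funext i
  rw [truncate, ite_eq_right_iff]
  intro hlt
  by_contra hne
  exact hlt.not_ge (hx i (Ne.symm hne))

variable [Fintype ι]

/-- The capped-ℓ1 penalty `Φ(x) = ∑ i, min {1, θ‖x_i‖}`, a surrogate for the number of nonzero
blocks of `x`. -/
noncomputable def penalty (θ : ℝ) (x : ∀ i, E i) : ℝ :=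
  ∑ i, min 1 (θ * ‖x i‖)

theorem truncate_eq_piecewise [DecidableEq ι] (τ : ℝ) (x : ∀ i, E i) :
    truncate τ x = Finset.piecewise {i | ‖x i‖ < τ} (0 : ∀ i, E i) x := by
  funext i
  simp [truncate, Finset.piecewise]

theorem sum_norm_lt_eq_zero_iff {τ : ℝ} {x : ∀ i, E i} :
    ∑ i with ‖x i‖ < τ, ‖x i‖ = 0 ↔ ∀ i, x i ≠ 0 → τ ≤ ‖x i‖ := by
  rw [Finset.sum_eq_zero_iff_of_nonneg fun i _ => norm_nonneg (x i)]
  simp only [Finset.mem_filter_univ, norm_eq_zero, ← not_lt]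
  exact forall_congr' fun i => not_imp_not.symm

theorem penalty_eq_penalty_truncate_add {θ : ℝ} (hθ : 0 < θ) (x : ∀ i, E i) :
    penalty θ x = penalty θ (truncate (1 / θ) x) + θ * ∑ i with ‖x i‖ < 1 / θ, ‖x i‖ := by
  rw [Finset.sum_filter, Finset.mul_sum, penalty, penalty, ← Finset.sum_add_distrib]
  refine Finset.sum_congr rfl fun i _ => ?_
  rw [truncate]
  split_ifs with hlt
  · have uncapped : θ * ‖x i‖ ≤ 1 := ((lt_div_iff₀' hθ).1 hlt).le
    simp [uncapped]
  · simp

end Truncation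

section Descent

variable {ι : Type*} [DecidableEq ι] {E : ι → Type*} {s : Set (∀ i, E i)} {x : ∀ i, E i}

theorem piecewise_zero_mem [∀ i, Zero (E i)] (hs : ∀ z ∈ s, ∀ i, update z i 0 ∈ s) (hx : x ∈ s)
    (S : Finset ι) : S.piecewise (0 : ∀ i, E i) x ∈ s := by
  induction S using Finset.induction_on with
  | empty => simpa only [Finset.piecewise_empty] using hx
  | insert a S _ ih => simpa only [Finset.piecewise_insert, Pi.zero_apply] using hs _ ih a

variable [∀ i, NormedAddCommGroup (E i)] {F : (∀ i, E i) → ℝ} {κ : ℝ}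

theorem apply_piecewise_zero_le (hs : ∀ z ∈ s, ∀ i, update z i 0 ∈ s)
    (hF : ∀ z ∈ s, ∀ i, F (update z i 0) ≤ F z + κ * ‖z i‖) (hx : x ∈ s) (S : Finset ι) :
    F (S.piecewise (0 : ∀ i, E i) x) ≤ F x + κ * ∑ i ∈ S, ‖x i‖ := by
  induction S using Finset.induction_on with
  | empty => simp
  | insert a S ha ih =>
    have hzero := hF _ (piecewise_zero_mem hs hx S) a
    rw [Finset.piecewise_eq_of_notMem _ _ _ ha] at hzero
    rw [Finset.piecewise_insert, Pi.zero_apply, Finset.sum_insert ha]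
    linarith

theorem truncate_mem [Finite ι] (hs : ∀ z ∈ s, ∀ i, update z i 0 ∈ s) (hx : x ∈ s) (τ : ℝ) :
    truncate τ x ∈ s := by
  cases nonempty_fintype ι
  rw [truncate_eq_piecewise]
  exact piecewise_zero_mem hs hx _

theorem objective_truncate_add_gap_le [Fintype ι] (hs : ∀ z ∈ s, ∀ i, update z i 0 ∈ s)
    (hF : ∀ z ∈ s, ∀ i, F (update z i 0) ≤ F z + κ * ‖z i‖) (hx : x ∈ s)
    {θ : ℝ} (hθ : 0 < θ) (lam : ℝ) :
    F (truncate (1 / θ) x) + lam * penalty θ (truncate (1 / θ) x) +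
        (lam * θ - κ) * ∑ i with ‖x i‖ < 1 / θ, ‖x i‖ ≤ F x + lam * penalty θ x := by
  have hF_truncate : F (truncate (1 / θ) x) ≤ F x + κ * ∑ i with ‖x i‖ < 1 / θ, ‖x i‖ := by
    rw [truncate_eq_piecewise]
    exact apply_piecewise_zero_le hs hF hx _
  rw [penalty_eq_penalty_truncate_add hθ x]
  linarith

end Descent

section Box

variable {ι β : Type*} [DecidableEq ι]

theorem update_zero_mem_box {l : ι → ℝ≥0∞} {Y : Set β} {p : (ι → ℝ) × β}
    (hp : (∀ i, ENNReal.ofReal |p.1 i| ≤ l i) ∧ p.2 ∈ Y) (j : ι) :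
    (∀ i, ENNReal.ofReal |update p.1 j 0 i| ≤ l i) ∧ p.2 ∈ Y := by
  refine ⟨fun i => ?_, hp.2⟩
  obtain rfl | hij := eq_or_ne i j
  · simp
  · simpa only [update_of_ne hij] using hp.1 i

variable [Fintype ι]

theorem card_ne_update_le_one {α : ι → Type*} [∀ i, DecidableEq (α i)] (x : ∀ i, α i) (i : ι)
    (a : α i) : (Finset.univ.filter fun j => x j ≠ update x i a j).card ≤ 1 := by
  refine (Finset.card_le_card fun j hj => ?_).trans (Finset.card_singleton i).le
  rw [Finset.mem_filter_univ] at hj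
  by_contra hji
  exact hj (update_of_ne (Finset.mem_singleton.not.1 hji) a x).symm

theorem sqrt_sum_sq_sub_update (x : ι → ℝ) (i : ι) (a : ℝ) :
    √(∑ j, (x j - update x i a j) ^ 2) = |x i - a| := by
  rw [Finset.sum_eq_single i (fun j _ hj => by simp [hj]) (by simp), update_self,
    Real.sqrt_sq_eq_abs]

theorem apply_update_zero_le {f : (ι → ℝ) × β → ℝ} {K : Set ((ι → ℝ) × β)} {κ : ℝ}
    (hK : ∀ p ∈ K, ∀ i, (update p.1 i 0, p.2) ∈ K)
    (hlip : ∀ p q : (ι → ℝ) × β, p ∈ K → q ∈ K → p.2 = q.2 →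
      (Finset.univ.filter fun i => p.1 i ≠ q.1 i).card ≤ 1 →
      |f p - f q| ≤ κ * √(∑ i, (p.1 i - q.1 i) ^ 2))
    {p : (ι → ℝ) × β} (hp : p ∈ K) (i : ι) :
    f (update p.1 i 0, p.2) ≤ f p + κ * ‖p.1 i‖ := by
  have hdist := hlip p (update p.1 i 0, p.2) hp (hK p hp i) rfl (card_ne_update_le_one p.1 i 0)
  rw [sqrt_sum_sq_sub_update, sub_zero, ← Real.norm_eq_abs (p.1 i)] at hdist
  linarith [neg_le_of_abs_le hdist]

end Box

end CappedL1

open CappedL1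

theorem stmt_19_general {ι β : Type*} [Fintype ι] [DecidableEq ι] {E : ι → Type*}
    [∀ i, NormedAddCommGroup (E i)] {f : (∀ i, E i) × β → ℝ} {K : Set ((∀ i, E i) × β)}
    {κ lam θ : ℝ} (hθ : 0 < θ) (hκ : κ < lam * θ)
    (hK : ∀ p ∈ K, ∀ i, (update p.1 i 0, p.2) ∈ K)
    (hf : ∀ p ∈ K, ∀ i, f (update p.1 i 0, p.2) ≤ f p + κ * ‖p.1 i‖) :
    ∀ p ∈ K,
      (truncate (1 / θ) p.1, p.2) ∈ K ∧
      f (truncate (1 / θ) p.1, p.2) + lam * penalty θ (truncate (1 / θ) p.1) ≤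
        f p + lam * penalty θ p.1 ∧
      (f p + lam * penalty θ p.1 =
          f (truncate (1 / θ) p.1, p.2) + lam * penalty θ (truncate (1 / θ) p.1) ↔
        ∀ i, p.1 i ≠ 0 → 1 / θ ≤ ‖p.1 i‖) := by
  rintro ⟨x, y⟩ hx
  have hslice : ∀ z ∈ {z | (z, y) ∈ K}, ∀ i, update z i 0 ∈ {z | (z, y) ∈ K} :=
    fun z hz => hK (z, y) hz
  have hgap := objective_truncate_add_gap_le hslice (F := fun z => f (z, y))
    (fun z hz => hf (z, y) hz) hx hθ lam
  have hrate : 0 < lam * θ - κ := sub_pos.2 hκ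
  have hmass : 0 ≤ ∑ i with ‖x i‖ < 1 / θ, ‖x i‖ := Finset.sum_nonneg fun i _ => norm_nonneg _
  refine ⟨truncate_mem hslice hx _, by linarith [mul_nonneg hrate.le hmass], fun heq => ?_,
    fun hlarge => by rw [truncate_eq_self hlarge]⟩
  rw [← sum_norm_lt_eq_zero_iff]
  exact hmass.antisymm' (nonpos_of_mul_nonpos_right (by linarith) hrate)

/-- truncation decreases the capped-ℓ1 penalized objective. For
`K = Π[-l_i,l_i] × Y`, `f` coordinatewise `κ`-Lipschitz in `x`, `θ > κ/λ`,
`Φ(x) = Σ min{1, θ|x_i|}` and `t^x` the truncation of `x` at level `1/θ`, one has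
`(t^x,y) ∈ K`, `f(x,y) + λΦ(x) ≥ f(t^x,y) + λΦ(t^x)`, with equality iff
`|x_i| ≥ 1/θ` for every `i` in the support of `x`. -/
theorem stmt_19 {n m : ℕ}
    (g h : (Fin n → ℝ) × (Fin m → ℝ) → ℝ)
    (hg : ConvexOn ℝ Set.univ g) (hh : ConvexOn ℝ Set.univ h)
    (f : (Fin n → ℝ) × (Fin m → ℝ) → ℝ) (hf : ∀ p, f p = g p - h p)
    (lam : ℝ) (hlam : 0 < lam)
    (l : Fin n → ℝ≥0∞) (Y : Set (Fin m → ℝ))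
    (K : Set ((Fin n → ℝ) × (Fin m → ℝ)))
    (hK : K = {p | (∀ i, ENNReal.ofReal |p.1 i| ≤ l i) ∧ p.2 ∈ Y})
    (κ : ℝ) (hκpos : 0 < κ)
    (hlip : ∀ p q : (Fin n → ℝ) × (Fin m → ℝ), p ∈ K → q ∈ K → p.2 = q.2 →
      (Finset.univ.filter fun i => p.1 i ≠ q.1 i).card ≤ 1 →
      |f p - f q| ≤ κ * Real.sqrt (∑ i, (p.1 i - q.1 i) ^ 2))
    (θ : ℝ) (hθ : κ / lam < θ)
    (Φ : (Fin n → ℝ) → ℝ) (hΦ : ∀ x, Φ x = ∑ i, min 1 (θ * |x i|))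
    (T : (Fin n → ℝ) → (Fin n → ℝ))
    (hT : ∀ x i, T x i = if |x i| < 1 / θ then 0 else x i) :
    ∀ p ∈ K,
      (T p.1, p.2) ∈ K ∧
      f (T p.1, p.2) + lam * Φ (T p.1) ≤ f p + lam * Φ p.1 ∧
      (f p + lam * Φ p.1 = f (T p.1, p.2) + lam * Φ (T p.1) ↔
        ∀ i, p.1 i ≠ 0 → 1 / θ ≤ |p.1 i|) := by
  obtain ⟨rfl, rfl⟩ : Φ = penalty θ ∧ T = truncate (1 / θ) := ⟨funext hΦ, funext₂ hT⟩
  have hzero : ∀ p ∈ K, ∀ i, (update p.1 i 0, p.2) ∈ K := by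
    subst hK
    exact fun _ => update_zero_mem_box
  exact stmt_19_general ((div_pos hκpos hlam).trans hθ) ((div_lt_iff₀' hlam).1 hθ) hzero
    fun _ => apply_update_zero_le hzero hlip
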